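/- There exist constants c, C > 0 such that the following holds. Let p̂ satisfy c·(log n)/n ≤ p̂ ≤ 1, and let (G_t)_{t∈ℕ} be a sequence of random graphs on [n] such that every G_t is distributed as G_{n,p̂} (as holds for a stationary edge-Markovian evolving graph with birth-rate p and death-rate q, where p̂ = p/(p+q)). Then with probability at least 1 − 1/n the flooding time of (G_t) is at most C · ( log n / log(n·p̂) + log log(n·p̂) ). -/

import Mathlib

open Finset MeasureTheory

noncomputable section

/-- Out-neighborhood `N_G(I)` of a set of nodes `I`. -/
def nbhd {n : ℕ} (G : SimpleGraph (Fin n)) (I : Finset (Fin n)) : Finset (Fin n) := by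
  classical exact Finset.univ.filter (fun v => v ∉ I ∧ ∃ u ∈ I, G.Adj u v)

/-- The informed sets of the flooding process on the graph sequence `Gs` with source `s`. -/
def informed {n : ℕ} (Gs : ℕ → SimpleGraph (Fin n)) (s : Fin n) : ℕ → Finset (Fin n)
  | 0 => {s}
  | t + 1 => informed Gs s t ∪ nbhd (Gs t) (informed Gs s t)

/-- `G` is an `(h,k)`-expander: every nonempty set of at most `h` nodes has
out-neighborhood of size at least `k` times its size. -/
def IsExpander {n : ℕ} (G : SimpleGraph (Fin n)) (h k : ℝ) : Prop :=
  ∀ I : Finset (Fin n), I.Nonempty → (I.card : ℝ) ≤ h →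
    k * (I.card : ℝ) ≤ ((nbhd G I).card : ℝ)

/-- Euclidean distance in the plane. -/
def euclDist (x y : ℝ × ℝ) : ℝ := Real.sqrt ((x.1 - y.1) ^ 2 + (x.2 - y.2) ^ 2)

/-- The grid `L_{n,ε}` of points `(iε, jε)`, `i, j ∈ ℕ`, `i, j ≤ √n/ε`. -/
def grid (n : ℕ) (ε : ℝ) : Finset (ℝ × ℝ) :=
  (Finset.range (⌊Real.sqrt n / ε⌋₊ + 1) ×ˢ Finset.range (⌊Real.sqrt n / ε⌋₊ + 1)).image
    (fun q => ((q.1 : ℝ) * ε, (q.2 : ℝ) * ε))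

/-- `Γ(x)`: grid points within (move) radius `r` of `x`. -/
def gamma (n : ℕ) (ε r : ℝ) (x : ℝ × ℝ) : Finset (ℝ × ℝ) := by
  classical exact (grid n ε).filter (fun y => euclDist x y ≤ r)

/-- The stationary distribution `π(x) = |Γ(x)| / Σ_y |Γ(y)|` of node positions. -/
def statDist (n : ℕ) (ε r : ℝ) (x : ℝ × ℝ) : ℝ :=
  if x ∈ grid n ε then
    ((gamma n ε r x).card : ℝ) / (∑ y ∈ grid n ε, ((gamma n ε r y).card : ℝ))
  else 0

/-- The `n` random positions `P` are independent, each distributed according to `π`. -/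
def IsIIDStationary (n : ℕ) (ε r : ℝ) {Ω : Type} [MeasurableSpace Ω] (μ : Measure Ω)
    (P : Ω → Fin n → ℝ × ℝ) : Prop :=
  ∀ f : Fin n → ℝ × ℝ, μ {ω | P ω = f} = ENNReal.ofReal (∏ i, statDist n ε r (f i))

/-- Number of cells per side: `m = ⌈√(5n)/R⌉`. -/
def numCells (n : ℕ) (R : ℝ) : ℕ := ⌈Real.sqrt (5 * n) / R⌉₊

/-- Side length of a cell. -/
def cellLen (n : ℕ) (R : ℝ) : ℝ := Real.sqrt n / (numCells n R : ℝ)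

/-- Membership of a point `x` in cell `(i,j)` of the `m × m` partition of the square
`[0,√n]²` (cells are half-open, except that the last row/column is closed above,
points of the square being below `√n` anyway). -/
def inCell (n : ℕ) (R : ℝ) (i j : ℕ) (x : ℝ × ℝ) : Prop :=
  ((i : ℝ) * cellLen n R ≤ x.1 ∧ (x.1 < ((i : ℝ) + 1) * cellLen n R ∨ i + 1 = numCells n R)) ∧
  ((j : ℝ) * cellLen n R ≤ x.2 ∧ (x.2 < ((j : ℝ) + 1) * cellLen n R ∨ j + 1 = numCells n R))

/-- The number of nodes whose positions (given by `p`) lie in cell `(i,j)`. -/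
def cellCount (n : ℕ) (R : ℝ) (p : Fin n → ℝ × ℝ) (i j : ℕ) : ℕ := by
  classical exact (Finset.univ.filter fun v => inCell n R i j (p v)).card

/-- The geometric graph: an edge between distinct `u, v` iff their positions are at
Euclidean distance at most `R`. -/
def geoGraph (n : ℕ) (R : ℝ) (p : Fin n → ℝ × ℝ) : SimpleGraph (Fin n) :=
  SimpleGraph.fromRel (fun u v => euclDist (p u) (p v) ≤ R)

/-- `x` lies in the square `[0,√n]²`. -/
def inSquare (n : ℕ) (x : ℝ × ℝ) : Prop :=
  0 ≤ x.1 ∧ x.1 ≤ Real.sqrt n ∧ 0 ≤ x.2 ∧ x.2 ≤ Real.sqrt n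

/-- The random graph `G` is distributed as the Erdős–Rényi graph `G_{n,p}`. -/
def IsErdosRenyi {n : ℕ} {Ω : Type} [MeasurableSpace Ω] (μ : Measure Ω)
    (G : Ω → SimpleGraph (Fin n)) (p : ℝ) : Prop :=
  ∀ H : SimpleGraph (Fin n),
    μ {ω | G ω = H} =
      ENNReal.ofReal (p ^ (Nat.card H.edgeSet) * (1 - p) ^ (n.choose 2 - Nat.card H.edgeSet))

/-! A set of about `20 / p` nodes has, up to a constant factor, `n` neighbours in `G_{n,p}`, and a
union bound over all sets `A` of at most that size shows that each snapshot expands every such set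
by a factor of at least `n p / 40`, except with probability `1 / n ^ 2`. Only a union bound over
at most `n` snapshots is then needed, so dependence between them is harmless. The concentration
of `|N(A)|` comes from its moment generating function: expanding
`θ ^ |N(A)| = ∏_{v ∉ A} (θ + (1 - θ) 1[v is isolated from A])` reduces it to the probabilities that
a set of edges is absent.

The informed set thus grows geometrically until it exceeds `n / 2`. The same applies to the sequence
of snapshots read backwards from a target `v`, which describes the nodes able to reach `v` by a
given time. Two sets of more than `n / 2` nodes intersect, so the information reaches `v`; this
meeting in the middle replaces the usual endgame and removes the `log log (n p)` term.
-/

open ProbabilityTheory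
open scoped SimpleGraph

section Flooding

variable {n t : ℕ} {Gs : ℕ → SimpleGraph (Fin n)} {s v : Fin n}

lemma mem_nbhd {G : SimpleGraph (Fin n)} {A : Finset (Fin n)} :
    v ∈ nbhd G A ↔ v ∉ A ∧ ∃ u ∈ A, G.Adj u v := by
  simp [nbhd]

lemma disjoint_nbhd (G : SimpleGraph (Fin n)) (A : Finset (Fin n)) : Disjoint A (nbhd G A) :=
  disjoint_right.2 fun _ hv => (mem_nbhd.1 hv).1

lemma mem_informed_succ :
    v ∈ informed Gs s (t + 1) ↔
      v ∈ informed Gs s t ∨ ∃ u ∈ informed Gs s t, (Gs t).Adj u v := by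
  rw [informed, mem_union, mem_nbhd]
  tauto

lemma monotone_informed (Gs : ℕ → SimpleGraph (Fin n)) (s : Fin n) : Monotone (informed Gs s) :=
  monotone_nat_of_le_succ fun _ => subset_union_left

lemma self_mem_informed (Gs : ℕ → SimpleGraph (Fin n)) (s : Fin n) (t : ℕ) :
    s ∈ informed Gs s t :=
  monotone_informed Gs s t.zero_le (mem_singleton_self s)

lemma mem_informed_add_of_reverse {u : Fin n} {a b : ℕ} (hu : u ∈ informed Gs s a)
    (hv : u ∈ informed (fun i => Gs (a + b - (i + 1))) v b) : v ∈ informed Gs s (a + b) := by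
  induction b generalizing a u with
  | zero => rwa [mem_singleton.1 hv] at hu
  | succ b ih =>
    have hshift : a + (b + 1) = a + 1 + b := by omega
    rw [mem_informed_succ, hshift] at hv
    rw [hshift]
    rcases hv with hv | ⟨w, hw, hadj⟩
    · exact ih (mem_informed_succ.2 (.inl hu)) hv
    · rw [show a + 1 + b - (b + 1) = a by omega] at hadj
      exact ih (mem_informed_succ.2 (.inr ⟨u, hu, hadj.symm⟩)) hw

lemma card_add_card_nbhd_le_card_informed_succ {A : Finset (Fin n)} (hA : A ⊆ informed Gs s t) :
    #A + #(nbhd (Gs t) A) ≤ #(informed Gs s (t + 1)) := by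
  rw [← card_union_of_disjoint (disjoint_nbhd _ A)]
  refine card_le_card fun v hv => mem_informed_succ.2 ?_
  rcases mem_union.1 hv with hv | hv
  · exact .inl (hA hv)
  · obtain ⟨-, u, hu, hadj⟩ := mem_nbhd.1 hv
    exact .inr ⟨u, hA hu, hadj⟩

variable {k : ℕ} {κ : ℝ}

lemma min_pow_le_card_informed (hκ : 0 ≤ κ) (hG : ∀ i < t, IsExpander (Gs i) k κ) :
    min (k : ℝ) (κ ^ t) ≤ #(informed Gs s t) := by
  induction t with
  | zero => simp [informed]
  | succ t ih =>
    have ih := ih fun i hi => hG i (by omega)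
    rcases le_or_gt (k : ℝ) #(informed Gs s t) with hk | hk
    · exact (min_le_left _ _).trans
        (hk.trans (mod_cast card_le_card (monotone_informed Gs s t.le_succ)))
    · calc min (k : ℝ) (κ ^ (t + 1)) ≤ κ ^ (t + 1) := min_le_right _ _
        _ = κ * κ ^ t := pow_succ' κ t
        _ ≤ κ * #(informed Gs s t) := by
          gcongr
          exact (min_le_iff.1 ih).resolve_left hk.not_ge
        _ ≤ #(nbhd (Gs t) (informed Gs s t)) :=
          hG t t.lt_succ_self _ ⟨s, self_mem_informed Gs s t⟩ hk.le
        _ ≤ #(informed Gs s (t + 1)) := mod_cast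
          (Nat.le_add_left _ _).trans (card_add_card_nbhd_le_card_informed_succ subset_rfl)

lemma add_mul_le_card_informed_succ (hk : 0 < k) (hκ : 0 ≤ κ) (hkt : k ≤ κ ^ t)
    (hG : ∀ i < t + 1, IsExpander (Gs i) k κ) :
    k + κ * k ≤ #(informed Gs s (t + 1)) := by
  have hcard : k ≤ #(informed Gs s t) := by
    simpa [hkt] using min_pow_le_card_informed (t := t) (s := s) hκ fun i hi => hG i (by omega)
  obtain ⟨A, hA, rfl⟩ := exists_subset_card_eq hcard
  calc (#A : ℝ) + κ * #A ≤ #A + #(nbhd (Gs t) A) := by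
        gcongr
        exact hG t t.lt_succ_self A (card_pos.1 hk) le_rfl
    _ ≤ #(informed Gs s (t + 1)) := mod_cast card_add_card_nbhd_le_card_informed_succ hA

theorem informed_eq_univ_of_isExpander (hk : 0 < k) (hκ : 0 ≤ κ) (hkt : k ≤ κ ^ t)
    (hn : n ≤ 2 * (κ * k)) (hG : ∀ i < t + 1 + (t + 1), IsExpander (Gs i) k κ) (s : Fin n) :
    informed Gs s (t + 1 + (t + 1)) = univ := by
  refine eq_univ_of_forall fun v => ?_
  set rev : ℕ → SimpleGraph (Fin n) := fun i => Gs (t + 1 + (t + 1) - (i + 1))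
  have hforward : k + κ * k ≤ #(informed Gs s (t + 1)) :=
    add_mul_le_card_informed_succ hk hκ hkt fun i hi => hG i (by omega)
  have hbackward : k + κ * k ≤ #(informed rev v (t + 1)) :=
    add_mul_le_card_informed_succ hk hκ hkt fun i hi => hG _ (by omega)
  have hmeet : ¬ Disjoint (informed Gs s (t + 1)) (informed rev v (t + 1)) := by
    intro hdisj
    have hcard : #(informed Gs s (t + 1)) + #(informed rev v (t + 1)) ≤ n := by
      simpa [card_union_of_disjoint hdisj] using
        card_le_univ (informed Gs s (t + 1) ∪ informed rev v (t + 1))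
    have hcard' : (#(informed Gs s (t + 1)) + #(informed rev v (t + 1)) : ℝ) ≤ n := mod_cast hcard
    have : (0 : ℝ) < k := mod_cast hk
    linarith
  obtain ⟨u, hu, hv⟩ := not_disjoint_iff.1 hmeet
  exact mem_informed_add_of_reverse hu hv

end Flooding


section BinomialRandomGraph

open SimpleGraph

lemma setBernoulli_real_disjoint {ι : Type*} {u : Set ι} (p : unitInterval) {F : Finset ι}
    (hF : (F : Set ι) ⊆ u) :
    setBer(u, p).real {s | Disjoint s F} = (1 - p : ℝ) ^ #F := by
  have hcylinder : (fun q : ι → Prop => {i | q i}) ⁻¹' {s : Set ι | Disjoint s F} =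
      Set.pi F fun _ => {False} := by
    ext q
    simp [Set.disjoint_right]
  rw [measureReal_def, setBernoulli_apply', hcylinder, Measure.infinitePi_pi _ (by simp),
    prod_eq_pow_card (b := (unitInterval.toNNReal (unitInterval.symm p) : ENNReal))]
  · simp
  · intro i hi
    simp [hF hi]

lemma card_image_mk_product {V : Type*} [DecidableEq V] {A B : Finset V} (hAB : Disjoint A B) :
    #((A ×ˢ B).image fun q => s(q.1, q.2)) = #A * #B := by
  rw [card_image_of_injOn, card_product]
  rintro ⟨a, b⟩ hab ⟨a', b'⟩ hab' h
  rw [mem_coe, mem_product] at hab hab'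
  rcases Sym2.eq_iff.1 h with ⟨rfl, rfl⟩ | ⟨rfl, rfl⟩
  · rfl
  · exact absurd hab'.2 (Finset.disjoint_left.1 hAB hab.1)

variable {V : Type*} [Countable V] (p : unitInterval)

lemma binomialRandom_real_disjoint_edgeSet {F : Finset (Sym2 V)}
    (hF : (F : Set (Sym2 V)) ⊆ Sym2.diagSetᶜ) :
    G(V, p).real {H | Disjoint H.edgeSet F} = (1 - p : ℝ) ^ #F := by
  have himage : edgeSet '' {H : SimpleGraph V | Disjoint H.edgeSet F} =
      {s ∈ {s : Set (Sym2 V) | Disjoint s F} | s ⊆ Sym2.diagSetᶜ} := by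
    ext s
    constructor
    · rintro ⟨H, hH, rfl⟩
      exact ⟨hH, edgeSet_subset_compl_diagSet H⟩
    · rintro ⟨hs, hdiag⟩
      have hedge : (fromEdgeSet s).edgeSet = s := by
        rwa [edgeSet_fromEdgeSet, sdiff_eq_left, ← Set.subset_compl_iff_disjoint_right]
      exact ⟨fromEdgeSet s, by rwa [Set.mem_ofPred_eq, hedge], hedge⟩
  rw [← setBernoulli_real_disjoint p hF, measureReal_def, binomialRandom_apply', himage,
    ← setBernoulli_apply_eq_apply_subsets, measureReal_def]

lemma binomialRandom_real_forall_not_adj {A B : Finset V} (hAB : Disjoint A B) :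
    G(V, p).real {H | ∀ b ∈ B, ∀ a ∈ A, ¬ H.Adj a b} = (1 - p : ℝ) ^ (#A * #B) := by
  classical
  set F := (A ×ˢ B).image fun q => s(q.1, q.2)
  have hmem : ∀ e : Sym2 V, e ∈ F ↔ ∃ a ∈ A, ∃ b ∈ B, s(a, b) = e := by
    simp [F, and_assoc]
  have hF : (F : Set (Sym2 V)) ⊆ Sym2.diagSetᶜ := by
    intro e he
    obtain ⟨a, ha, b, hb, rfl⟩ := (hmem e).1 he
    simpa using disjoint_iff_ne.1 hAB a ha b hb
  rw [← card_image_mk_product hAB, ← binomialRandom_real_disjoint_edgeSet p hF]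
  congr! 3 with H
  simp only [Set.disjoint_right, mem_coe, hmem, forall_exists_index, and_imp]
  constructor
  · rintro h _ a ha b hb rfl
    exact h b hb a ha
  · exact fun h b hb a ha => h a ha b hb rfl

instance : MeasurableSingletonClass (SimpleGraph V) where
  measurableSet_singleton H := by
    rw [← edgeSet_injective.preimage_image {H}, Set.image_singleton]
    exact measurable_edgeSet (measurableSet_singleton _)

variable {n : ℕ}

open Classical in
lemma pow_card_nbhd (θ : ℝ) (H : SimpleGraph (Fin n)) (A : Finset (Fin n)) :
    θ ^ #(nbhd H A) = ∑ B ∈ Aᶜ.powerset, (1 - θ) ^ #B * θ ^ (#Aᶜ - #B) *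
      {H : SimpleGraph (Fin n) | ∀ b ∈ B, ∀ a ∈ A, ¬ H.Adj a b}.indicator 1 H := by
  have hfilter : nbhd H A = {v ∈ Aᶜ | ∃ u ∈ A, H.Adj u v} := by ext; simp [mem_nbhd]
  calc θ ^ #(nbhd H A)
      = ∏ v ∈ Aᶜ, ((1 - θ) * (if ∀ u ∈ A, ¬ H.Adj u v then 1 else 0) + θ) := by
        rw [hfilter, ← prod_const, prod_filter]
        refine prod_congr rfl fun v _ => ?_
        split_ifs <;> grind
    _ = _ := by
        rw [prod_add]
        refine sum_congr rfl fun B hB => ?_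
        rw [prod_mul_distrib, prod_const, prod_const, prod_boole,
          card_sdiff_of_subset (mem_powerset.1 hB), mul_right_comm]
        simp [Set.indicator_apply]

lemma mgf_card_nbhd (A : Finset (Fin n)) (t : ℝ) :
    mgf (fun H => (#(nbhd H A) : ℝ)) G(Fin n, p) t =
      ((1 - Real.exp t) * (1 - p) ^ #A + Real.exp t) ^ #Aᶜ := by
  have hpow (H : SimpleGraph (Fin n)) :
      Real.exp (t * #(nbhd H A)) = Real.exp t ^ #(nbhd H A) := by
    rw [mul_comm, Real.exp_nat_mul]
  simp only [mgf, hpow, pow_card_nbhd]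
  rw [integral_finsetSum _ fun B _ => .of_finite, ← sum_pow_mul_eq_add_pow]
  refine sum_congr rfl fun B hB => ?_
  have hAB : Disjoint A B := disjoint_compl_right.mono_right (mem_powerset.1 hB)
  rw [integral_const_mul, integral_indicator_one (Set.toFinite _).measurableSet,
    binomialRandom_real_forall_not_adj p hAB, pow_mul, mul_pow]
  ring

lemma binomialRandom_real_card_nbhd_le_le (A : Finset (Fin n)) (x : ℝ) {t : ℝ} (ht : t ≤ 0) :
    G(Fin n, p).real {H | (#(nbhd H A) : ℝ) ≤ x} ≤
      Real.exp (-t * x - (1 - Real.exp t) * (1 - (1 - p) ^ #A) * #Aᶜ) := by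
  have hexp : Real.exp t ≤ 1 := Real.exp_le_one_iff.2 ht
  have hbase : (1 - Real.exp t) * (1 - p : ℝ) ^ #A + Real.exp t ≤
      Real.exp (-((1 - Real.exp t) * (1 - (1 - p) ^ #A))) := by
    linarith [Real.add_one_le_exp (-((1 - Real.exp t) * (1 - (1 - p : ℝ) ^ #A)))]
  have hnonneg : 0 ≤ (1 - Real.exp t) * (1 - p : ℝ) ^ #A + Real.exp t :=
    add_nonneg (mul_nonneg (sub_nonneg.2 hexp) (pow_nonneg (sub_nonneg.2 p.2.2) _))
      (Real.exp_pos t).le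
  calc G(Fin n, p).real {H | (#(nbhd H A) : ℝ) ≤ x}
      ≤ Real.exp (-t * x) * mgf (fun H => (#(nbhd H A) : ℝ)) G(Fin n, p) t :=
        measure_le_le_exp_mul_mgf x ht .of_finite
    _ ≤ Real.exp (-t * x) * Real.exp (-((1 - Real.exp t) * (1 - (1 - p) ^ #A))) ^ #Aᶜ := by
        rw [mgf_card_nbhd]
        gcongr
    _ = _ := by
        rw [← Real.exp_nat_mul, ← Real.exp_add]
        congr 1
        ring

lemma measureReal_not_isExpander_le {μ : Measure (SimpleGraph (Fin n))} [IsFiniteMeasure μ]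
    {h κ y : ℝ} (hy : 0 ≤ y) (hμ : ∀ A : Finset (Fin n), #A ≤ h →
      μ.real {H | (#(nbhd H A) : ℝ) < κ * #A} ≤ y ^ #A) :
    μ.real {H | ¬ IsExpander H h κ} ≤ (1 + y) ^ n - 1 := by
  classical
  have hunion : {H | ¬ IsExpander H h κ} =
      ⋃ A ∈ {A : Finset (Fin n) | A.Nonempty ∧ (#A : ℝ) ≤ h}.toFinset,
        {H | (#(nbhd H A) : ℝ) < κ * #A} := by
    ext H
    simp [IsExpander, and_assoc]
  have hbinom : ∑ A : Finset (Fin n), y ^ #A = (1 + y) ^ n := by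
    simpa [add_comm] using sum_pow_mul_eq_add_pow y 1 (univ : Finset (Fin n))
  calc μ.real {H | ¬ IsExpander H h κ}
      ≤ ∑ A ∈ {A : Finset (Fin n) | A.Nonempty ∧ (#A : ℝ) ≤ h}.toFinset,
          μ.real {H | (#(nbhd H A) : ℝ) < κ * #A} := by
        rw [hunion]
        exact measureReal_biUnion_finset_le _ _
    _ ≤ ∑ A ∈ {A : Finset (Fin n) | A.Nonempty ∧ (#A : ℝ) ≤ h}.toFinset, y ^ #A :=
        sum_le_sum fun A hA => hμ A (Set.mem_toFinset.1 hA).2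
    _ ≤ ∑ A ∈ univ.erase ∅, y ^ #A := by
        refine sum_le_sum_of_subset_of_nonneg (fun A hA => ?_) fun A _ _ => pow_nonneg hy _
        simpa using (Set.mem_toFinset.1 hA).1.ne_empty
    _ = (1 + y) ^ n - 1 := by
        rw [← hbinom, ← sum_erase_add univ _ (mem_univ (∅ : Finset (Fin n)))]
        simp

lemma one_add_pow_sub_one_le {y : ℝ} (hy : 0 ≤ y) {m : ℕ} (hmy : m * y ≤ 1) :
    (1 + y) ^ m - 1 ≤ 2 * (m * y) := by
  have hexp : (1 + y) ^ m ≤ Real.exp (m * y) := by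
    rw [Real.exp_nat_mul, add_comm]
    gcongr
    exact Real.add_one_le_exp y
  have habs : |(m * y : ℝ)| = m * y := abs_of_nonneg (by positivity)
  have := Real.abs_exp_sub_one_le (habs.trans_le hmy)
  linarith [le_abs_self (Real.exp (m * y) - 1)]

lemma one_sub_pow_le_inv {q : ℝ} (h0 : 0 ≤ q) (h1 : q ≤ 1) (m : ℕ) :
    (1 - q) ^ m ≤ (1 + m * q)⁻¹ := by
  have := sub_nonneg.2 h1
  rw [← one_div, le_div_iff₀ (by positivity)]
  calc (1 - q) ^ m * (1 + m * q) ≤ (1 - q) ^ m * (1 + q) ^ m := by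
        gcongr
        exact one_add_mul_le_pow (by linarith) m
    _ = (1 - q ^ 2) ^ m := by rw [← mul_pow]; ring
    _ ≤ 1 := pow_le_one₀ (by nlinarith) (by nlinarith)

lemma mul_div_le_one_sub_one_sub_pow {q c : ℝ} (h0 : 0 ≤ q) (h1 : q ≤ 1) {m : ℕ} (hc : m * q ≤ c) :
    m * q / (1 + c) ≤ 1 - (1 - q) ^ m :=
  calc m * q / (1 + c) ≤ m * q / (1 + m * q) := by gcongr
    _ = 1 - (1 + m * q)⁻¹ := by field_simp; ring
    _ ≤ 1 - (1 - q) ^ m := sub_le_sub_left (one_sub_pow_le_inv h0 h1 m) 1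

lemma one_sub_div_mul_le_card_compl {A : Finset (Fin n)} {a d q : ℝ} (hd : 0 < d)
    (hdq : d ≤ n * q) (hqA : q * #A ≤ a) : (1 - a / d) * n ≤ #Aᶜ := by
  have hA : (#A : ℝ) ≤ a / d * n := by
    rw [div_mul_eq_mul_div, le_div_iff₀ hd]
    calc (#A : ℝ) * d ≤ #A * (n * q) := by gcongr
      _ = n * (q * #A) := by ring
      _ ≤ n * a := by gcongr
      _ = a * n := mul_comm _ _
  rw [card_compl, Fintype.card_fin, Nat.cast_sub (by simpa using card_le_univ A)]
  linarith

lemma binomialRandom_real_card_nbhd_lt_le {k : ℕ} (hnp : 2000 ≤ n * (p : ℝ))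
    (hk : 19 ≤ p * (k : ℝ)) (hk' : p * (k : ℝ) ≤ 20) {A : Finset (Fin n)} (hA : #A ≤ k) :
    G(Fin n, p).real {H | (#(nbhd H A) : ℝ) < n / (2 * k) * #A} ≤
      Real.exp (-(n * p / 1000)) ^ #A := by
  have hp0 : 0 ≤ (p : ℝ) := p.2.1
  have hAk : (#A : ℝ) ≤ k := mod_cast hA
  have hpA : p * (#A : ℝ) ≤ 20 := (mul_le_mul_of_nonneg_left hAk hp0).trans hk'
  have hexp : 0.63 ≤ 1 - Real.exp (-1) := by linarith [Real.exp_neg_one_lt_d9]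
  have hprob : (p * #A / 21 : ℝ) ≤ 1 - (1 - p) ^ #A := by
    have := mul_div_le_one_sub_one_sub_pow hp0 p.2.2 (mul_comm (p : ℝ) #A ▸ hpA)
    rwa [mul_comm (#A : ℝ), show (1 : ℝ) + 20 = 21 by norm_num] at this
  have hcompl : 0.99 * n ≤ (#Aᶜ : ℝ) := by
    convert one_sub_div_mul_le_card_compl (by norm_num) hnp hpA using 2
    norm_num
  have htarget : (n / (2 * k) * #A : ℝ) ≤ n * (p * #A) / 38 := by
    have hk0 : 0 < (k : ℝ) := pos_of_mul_pos_right (by linarith) hp0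
    calc (n / (2 * k) * #A : ℝ) = n * #A / (2 * k) := by ring
      _ ≤ n * (p * #A) / 38 := by
        rw [div_le_div_iff₀ (by positivity) (by norm_num)]
        have : n * #A * 19 ≤ n * (#A : ℝ) * (p * k) := by gcongr
        linarith
  -- `0.63 * 0.99 / 21 > 1 / 38`, and `1 / 1000` is less than the difference.
  have hmean : (0.63 * (p * #A / 21) * (0.99 * n) : ℝ) ≤
      (1 - Real.exp (-1)) * (1 - (1 - p : ℝ) ^ #A) * #Aᶜ := by
    gcongr
    exact mul_nonneg (by linarith) (le_trans (by positivity) hprob)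
  calc G(Fin n, p).real {H | (#(nbhd H A) : ℝ) < n / (2 * k) * #A}
      ≤ G(Fin n, p).real {H | (#(nbhd H A) : ℝ) ≤ n / (2 * k) * #A} :=
        measureReal_mono (Set.ofPred_subset_ofPred.2 fun _ => le_of_lt)
    _ ≤ Real.exp (-(-1) * (n / (2 * k) * #A) -
          (1 - Real.exp (-1)) * (1 - (1 - p) ^ #A) * #Aᶜ) :=
        binomialRandom_real_card_nbhd_le_le p A _ (by norm_num)
    _ ≤ Real.exp (#A * -(n * p / 1000)) := by
        have : (0 : ℝ) ≤ n * (p * #A) := by positivity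
        gcongr
        linarith
    _ = Real.exp (-(n * p / 1000)) ^ #A := Real.exp_nat_mul _ _

lemma one_le_two_mul_log_natCast (hn : 2 ≤ n) : 1 ≤ 2 * Real.log n := by
  linarith [Real.log_two_gt_d9, Real.log_le_log two_pos (Nat.ofNat_le_cast.2 hn)]

lemma binomialRandom_real_not_isExpander_le {k : ℕ} (hn : 2 ≤ n) (hlog : 4000 * Real.log n ≤ n * p)
    (hk : 19 ≤ p * (k : ℝ)) (hk' : p * (k : ℝ) ≤ 20) :
    G(Fin n, p).real {H | ¬ IsExpander H k (n / (2 * k))} ≤ 1 / n ^ 2 := by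
  have hn' : (2 : ℝ) ≤ n := mod_cast hn
  have hn0 : (0 : ℝ) < n := by linarith
  have hnp : 2000 ≤ n * (p : ℝ) := by linarith [one_le_two_mul_log_natCast hn]
  set y := Real.exp (-(n * p / 1000))
  have hy : y ≤ 1 / n ^ 4 :=
    calc y ≤ Real.exp (-(4 * Real.log n)) := Real.exp_le_exp.2 (by linarith)
      _ = 1 / n ^ 4 := by
          rw [Real.exp_neg, one_div, ← Real.exp_log hn0, ← Real.exp_nat_mul, Real.log_exp]
          norm_num
  have hny : 2 * (n * y) ≤ 1 / n ^ 2 :=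
    calc 2 * (n * y) ≤ n * (n * (1 / n ^ 4)) := by gcongr
      _ = 1 / n ^ 2 := by field_simp
  have hsq : 1 / (n : ℝ) ^ 2 ≤ 1 := div_le_one_of_le₀ (one_le_pow₀ (by linarith)) (by positivity)
  calc G(Fin n, p).real {H | ¬ IsExpander H k (n / (2 * k))}
      ≤ (1 + y) ^ n - 1 := measureReal_not_isExpander_le (Real.exp_pos _).le fun A hA =>
        binomialRandom_real_card_nbhd_lt_le p hnp hk hk' (mod_cast hA)
    _ ≤ 2 * (n * y) := one_add_pow_sub_one_le (Real.exp_pos _).le (by linarith)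
    _ ≤ 1 / n ^ 2 := hny

end BinomialRandomGraph

namespace IsErdosRenyi

open SimpleGraph

variable {n : ℕ} {Ω : Type} [MeasurableSpace Ω] {μ : Measure Ω} {p : unitInterval}

lemma measure_preimage_le {G : Ω → SimpleGraph (Fin n)} (hG : IsErdosRenyi μ G p)
    (S : Set (SimpleGraph (Fin n))) : μ (G ⁻¹' S) ≤ G(Fin n, p) S := by
  classical
  have hmass (H : SimpleGraph (Fin n)) : μ (G ⁻¹' {H}) = G(Fin n, p) {H} := by
    refine (hG H).trans ?_
    have hp (q : unitInterval) : ENNReal.ofReal q = unitInterval.toNNReal q :=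
      ENNReal.ofReal_eq_coe_nnreal q.2.1
    rw [binomialRandom_singleton, Nat.card_coe_set_eq, Nat.card_fin,
      ENNReal.ofReal_mul (pow_nonneg p.2.1 _), ENNReal.ofReal_pow p.2.1,
      ENNReal.ofReal_pow (sub_nonneg.2 p.2.2), hp, ← hp (unitInterval.symm p),
      unitInterval.coe_symm_eq]
  calc μ (G ⁻¹' S) = μ (⋃ H ∈ S.toFinset, G ⁻¹' {H}) := by
        congr 1
        ext ω
        simp
    _ ≤ ∑ H ∈ S.toFinset, μ (G ⁻¹' {H}) := measure_biUnion_finset_le _ _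
    _ = G(Fin n, p) S := by simp only [hmass, sum_measure_singleton, Set.coe_toFinset]

lemma measure_exists_not_isExpander_le {Gs : ℕ → Ω → SimpleGraph (Fin n)}
    (hG : ∀ t, IsErdosRenyi μ (Gs t) p) (hn : 2 ≤ n) (hlog : 4000 * Real.log n ≤ n * p) {k T : ℕ}
    (hk : 19 ≤ p * (k : ℝ)) (hk' : p * (k : ℝ) ≤ 20) (hT : T ≤ n) :
    μ {ω | ∃ t < T, ¬ IsExpander (Gs t ω) k (n / (2 * k))} ≤ ENNReal.ofReal (1 / n) :=
  calc μ {ω | ∃ t < T, ¬ IsExpander (Gs t ω) k (n / (2 * k))}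
      = μ (⋃ t ∈ range T, Gs t ⁻¹' {H | ¬ IsExpander H k (n / (2 * k))}) := by
        congr 1
        ext ω
        simp
    _ ≤ ∑ t ∈ range T, μ (Gs t ⁻¹' {H | ¬ IsExpander H k (n / (2 * k))}) :=
        measure_biUnion_finset_le _ _
    _ ≤ ∑ t ∈ range T, ENNReal.ofReal (1 / n ^ 2) := by
        refine sum_le_sum fun t _ => ((hG t).measure_preimage_le _).trans ?_
        rw [← ofReal_measureReal]
        exact ENNReal.ofReal_le_ofReal (binomialRandom_real_not_isExpander_le p hn hlog hk hk')
    _ = ENNReal.ofReal (T * (1 / n ^ 2)) := by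
        rw [sum_const, card_range, ← ENNReal.ofReal_nsmul, nsmul_eq_mul]
    _ ≤ ENNReal.ofReal (n * (1 / n ^ 2)) := by gcongr
    _ = ENNReal.ofReal (1 / n) := by congr 1; field_simp

end IsErdosRenyi

section Parameters

lemma exists_nat_mul_mem_Icc {a q : ℝ} (ha : 0 ≤ a) (h0 : 0 < q) (h1 : q ≤ 1) :
    ∃ k : ℕ, q * k ∈ Set.Icc (a - 1) a := by
  have hfloor : (⌊a / q⌋₊ : ℝ) ≤ a / q := Nat.floor_le (by positivity)
  have hlt : a / q < ⌊a / q⌋₊ + 1 := Nat.lt_floor_add_one _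
  rw [le_div_iff₀ h0] at hfloor
  rw [div_lt_iff₀ h0] at hlt
  exact ⟨⌊a / q⌋₊, by linarith, by linarith⟩

lemma one_le_log {x : ℝ} (hx : 3 ≤ x) : 1 ≤ Real.log x :=
  (Real.le_log_iff_exp_le (by linarith)).2 (Real.exp_one_lt_three.le.trans hx)

lemma exists_le_div_pow {b d x : ℝ} (hb : 1 ≤ b) (hbd : b ^ 2 < d) (hdx : d ≤ x) :
    ∃ L : ℕ, x ≤ (d / b) ^ L ∧ L + 1 ≤ 4 * (Real.log x / Real.log d) := by
  have hd : 1 < d := (one_le_pow₀ hb).trans_lt hbd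
  have hlogd : 0 < Real.log d := Real.log_pos hd
  have hratio : 1 ≤ Real.log x / Real.log d :=
    (one_le_div hlogd).2 (Real.log_le_log (by linarith) hdx)
  have hsqrt : Real.log d / 2 ≤ Real.log (d / b) := by
    have hlogb : 2 * Real.log b ≤ Real.log d := by
      simpa using Real.log_le_log (by positivity) hbd.le
    rw [Real.log_div (by linarith) (by linarith)]
    linarith
  have hlog : 0 < Real.log (d / b) := by linarith
  refine ⟨⌈Real.log x / Real.log (d / b)⌉₊, ?_, ?_⟩
  · rw [Real.le_pow_iff_log_le (by linarith) (by positivity), ← div_le_iff₀ hlog]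
    exact Nat.le_ceil _
  · have hlogx : 0 ≤ Real.log x := Real.log_nonneg (by linarith)
    calc (⌈Real.log x / Real.log (d / b)⌉₊ + 1 : ℝ)
        ≤ Real.log x / Real.log (d / b) + 1 + 1 := by
          gcongr
          exact (Nat.ceil_lt_add_one (div_nonneg hlogx hlog.le)).le
      _ ≤ Real.log x / (Real.log d / 2) + 1 + 1 := by gcongr
      _ = 2 * (Real.log x / Real.log d) + 1 + 1 := by field_simp
      _ ≤ 4 * (Real.log x / Real.log d) := by linarith

lemma exists_nat_le_div_pow {n : ℕ} {p : ℝ} (hp1 : p ≤ 1) (hnp : 2000 ≤ n * p) :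
    ∃ k L : ℕ, 19 ≤ p * k ∧ p * k ≤ 20 ∧ (k : ℝ) ≤ (n / (2 * k)) ^ L ∧
      L + 1 ≤ 4 * (Real.log n / Real.log (n * p)) := by
  have hp0 : 0 < p := pos_of_mul_pos_right (by linarith) n.cast_nonneg
  obtain ⟨k, hk, hk'⟩ := exists_nat_mul_mem_Icc (a := 20) (by norm_num) hp0 hp1
  have hk0 : (0 : ℝ) < k := pos_of_mul_pos_right (by linarith) hp0.le
  obtain ⟨L, hL, hLlog⟩ := exists_le_div_pow (b := 40) (by norm_num) (by linarith)
    (mul_le_of_le_one_right n.cast_nonneg hp1)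
  refine ⟨k, L, by linarith, hk', ?_, hLlog⟩
  have hkn : (k : ℝ) ≤ n := by nlinarith
  have hratio : n * p / 40 ≤ n / (2 * k) := by
    rw [div_le_div_iff₀ (by norm_num) (by positivity)]
    nlinarith
  calc (k : ℝ) ≤ n := hkn
    _ ≤ (n * p / 40) ^ L := hL
    _ ≤ (n / (2 * k)) ^ L := by gcongr

end Parameters

lemma ofReal_one_sub_le_measure {Ω : Type*} [MeasurableSpace Ω] {μ : Measure Ω}
    [IsProbabilityMeasure μ] {S : Set Ω} {ε : ℝ} (hε : 0 ≤ ε) (hS : μ Sᶜ ≤ ENNReal.ofReal ε) :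
    ENNReal.ofReal (1 - ε) ≤ μ S := by
  rw [ENNReal.ofReal_sub _ hε, ENNReal.ofReal_one, tsub_le_iff_right, ← measure_univ (μ := μ)]
  exact (measure_univ_le_add_compl S).trans (by gcongr)

theorem edge_flooding_ub_general {n : ℕ} {p : ℝ} {Ω : Type} [MeasurableSpace Ω] {μ : Measure Ω}
    [IsProbabilityMeasure μ] {Gs : ℕ → Ω → SimpleGraph (Fin n)} (hn : 2 ≤ n)
    (hp : 4000 * Real.log n / n ≤ p) (hp1 : p ≤ 1) (hG : ∀ t, IsErdosRenyi μ (Gs t) p) :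
    ENNReal.ofReal (1 - 1 / (n : ℝ)) ≤
      μ {ω | ∃ T : ℕ, (T : ℝ) ≤ 8 * (Real.log n / Real.log (n * p)) ∧
        ∀ s, informed (fun t => Gs t ω) s T = univ} := by
  have hn0 : (0 : ℝ) < n := by positivity
  have hlog : 4000 * Real.log n ≤ n * p := by rwa [div_le_iff₀' hn0] at hp
  have hnp : 2000 ≤ n * p := by linarith [one_le_two_mul_log_natCast hn]
  lift p to unitInterval using ⟨(pos_of_mul_pos_right (by linarith) hn0.le).le, hp1⟩
  obtain ⟨k, L, hk, hk', hkL, hL⟩ := exists_nat_le_div_pow hp1 hnp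
  have hk0 : (0 : ℝ) < k := pos_of_mul_pos_right (by linarith) p.2.1
  have hT : L + 1 + (L + 1) ≤ n := by
    have hlogn : 0 ≤ Real.log n := Real.log_natCast_nonneg n
    have : Real.log n / Real.log (n * p) ≤ Real.log n :=
      div_le_self hlogn (one_le_log (by linarith))
    have : (n : ℝ) * p ≤ n := mul_le_of_le_one_right hn0.le hp1
    exact_mod_cast (by push_cast; linarith : ((L + 1 + (L + 1) : ℕ) : ℝ) ≤ n)
  refine ofReal_one_sub_le_measure (by positivity) ((measure_mono fun ω hω => ?_).trans
    (IsErdosRenyi.measure_exists_not_isExpander_le hG hn hlog hk hk' hT))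
  by_contra hexp
  refine hω ⟨L + 1 + (L + 1), by push_cast; linarith, ?_⟩
  simp only [Set.mem_ofPred_eq, not_exists, not_and, not_not] at hexp
  exact informed_eq_univ_of_isExpander (mod_cast hk0) (by positivity) hkL
    (by field_simp; rfl) hexp

/-- upper bound on flooding time of stationary edge-MEG. -/
theorem edge_flooding_ub :
    ∃ c C : ℝ, 0 < c ∧ 0 < C ∧
      ∀ (n : ℕ) (phat : ℝ) (Ω : Type) [MeasurableSpace Ω] (μ : Measure Ω)
        [IsProbabilityMeasure μ] (Gs : ℕ → Ω → SimpleGraph (Fin n)),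
        2 ≤ n → c * Real.log n / n ≤ phat → phat ≤ 1 →
        (∀ t : ℕ, IsErdosRenyi μ (Gs t) phat) →
        ENNReal.ofReal (1 - 1 / (n : ℝ)) ≤
          μ {ω | ∃ T : ℕ,
            (T : ℝ) ≤ C * (Real.log n / Real.log ((n : ℝ) * phat) +
              Real.log (Real.log ((n : ℝ) * phat))) ∧
            ∀ src : Fin n, informed (fun t => Gs t ω) src T = Finset.univ} := by
  refine ⟨4000, 8, by norm_num, by norm_num, fun n p _ _ _ _ _ hn hp hp1 hG =>
    (edge_flooding_ub_general hn hp hp1 hG).trans (measure_mono ?_)⟩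
  rintro _ ⟨T, hT, hflood⟩
  have hlog : 4000 * Real.log n ≤ n * p := by rwa [div_le_iff₀' (by positivity)] at hp
  have hloglog : 0 ≤ Real.log (Real.log (n * p)) :=
    Real.log_nonneg (one_le_log (by linarith [one_le_two_mul_log_natCast hn]))
  exact ⟨T, by linarith, hflood⟩

end
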